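/- Let R → R′ be a stabilization of a rectangular diagram R, and let P be any vertex of the connected component of R on which this stabilization occurs. Then there is a stabilization R → R″ of the same type (I or II) occurring in a small neighborhood of P such that the diagrams R′ and R″ can be connected by a finite sequence of commutations and cyclic permutations. -/

import Mathlib

noncomputable section
open scoped Classical

/-- A point of the plane. -/
abbrev Pt : Type := ℝ × ℝ

/-- A rectangular diagram: a finite set of points in the plane such that every
vertical or horizontal straight line contains either no points or exactly two points of it. -/
def IsDiagram (R : Finset Pt) : Prop :=
  ∀ p ∈ R, (R.filter (fun q => q.1 = p.1)).card = 2 ∧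
    (R.filter (fun q => q.2 = p.2)).card = 2

/-- The complexity of a rectangular diagram: the number of its vertical edges. -/
def complexity (R : Finset Pt) : ℕ := (R.image Prod.fst).card

/-- Moving the vertical line `x0` to position `x1` (all other points unchanged). -/
def vmap (x0 x1 : ℝ) : Pt → Pt := fun p => if p.1 = x0 then (x1, p.2) else p

/-- Moving the horizontal line `y0` to position `y1`. -/
def hmap (y0 y1 : ℝ) : Pt → Pt := fun p => if p.2 = y0 then (p.1, y1) else p

/-- Exchanging the vertical lines `x1` and `x2`. -/
def swapv (x1 x2 : ℝ) : Pt → Pt := fun p =>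
  if p.1 = x1 then (x2, p.2) else if p.1 = x2 then (x1, p.2) else p

/-- Exchanging the horizontal lines `y1` and `y2`. -/
def swaph (y1 y2 : ℝ) : Pt → Pt := fun p =>
  if p.2 = y1 then (p.1, y2) else if p.2 = y2 then (p.1, y1) else p

/-- `f` realizes a cyclic permutation on the finite set `R`:  an extreme (left/right/top/bottom)
edge is moved to the opposite side of the diagram. -/
def CyclicData (R : Finset Pt) (f : Pt → Pt) : Prop :=
  (∃ x0 x1 : ℝ, (∃ p ∈ R, p.1 = x0) ∧
     (((∀ p ∈ R, x0 ≤ p.1) ∧ ∀ p ∈ R, p.1 ≠ x0 → p.1 < x1) ∨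
      ((∀ p ∈ R, p.1 ≤ x0) ∧ ∀ p ∈ R, p.1 ≠ x0 → x1 < p.1)) ∧
     f = vmap x0 x1) ∨
  (∃ y0 y1 : ℝ, (∃ p ∈ R, p.2 = y0) ∧
     (((∀ p ∈ R, y0 ≤ p.2) ∧ ∀ p ∈ R, p.2 ≠ y0 → p.2 < y1) ∨
      ((∀ p ∈ R, p.2 ≤ y0) ∧ ∀ p ∈ R, p.2 ≠ y0 → y1 < p.2)) ∧
     f = hmap y0 y1)

/-- The pairs of second coordinates of the points of `R` on the vertical lines `x1`, `x2`
do not interleave. -/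
def NoInterleaveV (R : Finset Pt) (x1 x2 : ℝ) : Prop :=
  ∀ p ∈ R, ∀ p' ∈ R, ∀ q ∈ R, ∀ q' ∈ R,
    p.1 = x1 → p'.1 = x1 → q.1 = x2 → q'.1 = x2 →
    ¬ ((p.2 < q.2 ∧ q.2 < p'.2 ∧ p'.2 < q'.2) ∨
       (q.2 < p.2 ∧ p.2 < q'.2 ∧ q'.2 < p'.2))

/-- The pairs of first coordinates of the points of `R` on the horizontal lines `y1`, `y2`
do not interleave. -/
def NoInterleaveH (R : Finset Pt) (y1 y2 : ℝ) : Prop :=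
  ∀ p ∈ R, ∀ p' ∈ R, ∀ q ∈ R, ∀ q' ∈ R,
    p.2 = y1 → p'.2 = y1 → q.2 = y2 → q'.2 = y2 →
    ¬ ((p.1 < q.1 ∧ q.1 < p'.1 ∧ p'.1 < q'.1) ∨
       (q.1 < p.1 ∧ p.1 < q'.1 ∧ q'.1 < p'.1))

/-- `f` realizes a commutation on `R`: two neighboring parallel edges, whose pairs of endpoints
projected to the common axis are disjoint and do not interleave, are exchanged. -/
def CommData (R : Finset Pt) (f : Pt → Pt) : Prop :=
  (∃ x1 x2 : ℝ, x1 ≠ x2 ∧ (∃ p ∈ R, p.1 = x1) ∧ (∃ p ∈ R, p.1 = x2) ∧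
     (∀ p ∈ R, ¬ (min x1 x2 < p.1 ∧ p.1 < max x1 x2)) ∧
     (∀ p ∈ R, ∀ q ∈ R, p.1 = x1 → q.1 = x2 → p.2 ≠ q.2) ∧
     NoInterleaveV R x1 x2 ∧ f = swapv x1 x2) ∨
  (∃ y1 y2 : ℝ, y1 ≠ y2 ∧ (∃ p ∈ R, p.2 = y1) ∧ (∃ p ∈ R, p.2 = y2) ∧
     (∀ p ∈ R, ¬ (min y1 y2 < p.2 ∧ p.2 < max y1 y2)) ∧
     (∀ p ∈ R, ∀ q ∈ R, p.2 = y1 → q.2 = y2 → p.1 ≠ q.1) ∧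
     NoInterleaveH R y1 y2 ∧ f = swaph y1 y2)

/-- A cyclic permutation move of rectangular diagrams. -/
def CyclicMove (R R' : Finset Pt) : Prop :=
  IsDiagram R ∧ IsDiagram R' ∧ ∃ f, CyclicData R f ∧ R' = R.image f

/-- A commutation move of rectangular diagrams. -/
def CommMove (R R' : Finset Pt) : Prop :=
  IsDiagram R ∧ IsDiagram R' ∧ ∃ f, CommData R f ∧ R' = R.image f

/-- The type of a stabilization/destabilization. -/
inductive StabType
  | I : StabType
  | II : StabType
deriving DecidableEq

/-- Result of replacing the vertex `(x, y)` by the three other vertices of the small square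
with corners `(x, y)`, `(x', y)`, `(x, y')`, `(x', y')`. -/
def stabSet (x y x' y' : ℝ) (C : Finset Pt) : Finset Pt :=
  insert ((x', y) : Pt) (insert ((x, y') : Pt) (insert ((x', y') : Pt) (C.erase (x, y))))

/-- The data of a stabilization of `R` at the vertex `(x, y)`, yielding `R'`:  the vertex is
replaced by the three other corners of a small square (`x'`, `y'` are fresh coordinates,
and no coordinate of `R` lies strictly between `x, x'` nor between `y, y'`). -/
def StabData (x y x' y' : ℝ) (R R' : Finset Pt) : Prop :=
  (x, y) ∈ R ∧ x ≠ x' ∧ y ≠ y' ∧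
  (∀ p ∈ R, p.1 ≠ x') ∧ (∀ p ∈ R, p.2 ≠ y') ∧
  (∀ p ∈ R, ¬ (min x x' < p.1 ∧ p.1 < max x x')) ∧
  (∀ p ∈ R, ¬ (min y y' < p.2 ∧ p.2 < max y y')) ∧
  R' = stabSet x y x' y' R

/-- A stabilization of type `t` occurring at the vertex `v` of `R`.  The type is I when the two
new short edges point from their common vertex downward-and-leftward or upward-and-rightward. -/
def StabMoveAt (t : StabType) (v : Pt) (R R' : Finset Pt) : Prop :=
  IsDiagram R ∧ IsDiagram R' ∧
  ∃ x' y' : ℝ, StabData v.1 v.2 x' y' R R' ∧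
    (t = StabType.I ↔ 0 < (v.1 - x') * (v.2 - y'))

/-- A stabilization of type `t`. -/
def StabMove (t : StabType) (R R' : Finset Pt) : Prop :=
  ∃ v : Pt, StabMoveAt t v R R'

/-- A complexity-preserving elementary move: a cyclic permutation or a commutation. -/
def ExchangeMove (R R' : Finset Pt) : Prop := CyclicMove R R' ∨ CommMove R R'

/-- An elementary move of rectangular diagrams: a cyclic permutation, a commutation,
a stabilization or a destabilization. -/
def ElemMove (R R' : Finset Pt) : Prop :=
  CyclicMove R R' ∨ CommMove R R' ∨ ∃ t, StabMove t R R' ∨ StabMove t R' R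

/-- An elementary move involving no stabilization or destabilization of type other than `t`. -/
def LegMove (t : StabType) (R R' : Finset Pt) : Prop :=
  CyclicMove R R' ∨ CommMove R R' ∨ StabMove t R R' ∨ StabMove t R' R

/-- Legendrian equivalence: connected by a finite sequence of elementary moves containing
no type II stabilizations or destabilizations. -/
def LegEquiv : Finset Pt → Finset Pt → Prop :=
  Relation.ReflTransGen (LegMove StabType.I)

/-- Connected by a finite sequence of elementary moves containing
no type I stabilizations or destabilizations. -/
def MirrorEquiv : Finset Pt → Finset Pt → Prop :=
  Relation.ReflTransGen (LegMove StabType.II)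

/-- An elementary simplification of type `t` : a finite sequence of cyclic permutations and
commutations followed by one destabilization of type `t`. -/
def ElemSimp (t : StabType) (R R' : Finset Pt) : Prop :=
  ∃ S, Relation.ReflTransGen ExchangeMove R S ∧ StabMove t R' S
/-- A rectangular diagram of a knot: a nonempty rectangular diagram none of whose nonempty
proper subsets is a rectangular diagram (i.e. it consists of a single closed broken line). -/
def IsKnotDiagram (R : Finset Pt) : Prop :=
  IsDiagram R ∧ R.Nonempty ∧ ∀ S ⊆ R, IsDiagram S → S.Nonempty → S = R

/-- A connected component of a rectangular diagram `R`: a subset of `R` that is itself a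
rectangular diagram of a knot. -/
def IsComponent (R K : Finset Pt) : Prop := K ⊆ R ∧ IsKnotDiagram K

/-- A rectangular path: a finite planar point set that becomes a rectangular diagram of a knot
after adding exactly one point, or exactly two points lying on one vertical or horizontal line;
a single point is also a rectangular path. -/
def IsPath (P : Finset Pt) : Prop :=
  (∃ p : Pt, P = {p}) ∨
  (∃ q : Pt, q ∉ P ∧ IsKnotDiagram (insert q P)) ∨
  (∃ q r : Pt, q ≠ r ∧ q ∉ P ∧ r ∉ P ∧ (q.1 = r.1 ∨ q.2 = r.2) ∧
     IsKnotDiagram (insert q (insert r P)))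

/-- The ends of a rectangular path: the (vertical — `true`, or horizontal — `false`) straight
lines containing exactly one vertex of the path. -/
def Ends (P : Finset Pt) : Set (Bool × ℝ) :=
  {l | (l.1 = true ∧ (P.filter (fun p => p.1 = l.2)).card = 1) ∨
       (l.1 = false ∧ (P.filter (fun p => p.2 = l.2)).card = 1)}

/-!
It suffices to pass from a vertex to the other end of a horizontal edge: vertical edges follow by
reflecting in the diagonal, and the vertices reached in this way form a subdiagram of the
component, hence all of it. Up to commutations and cyclic permutations only the cyclic order of the
vertical edges matters, and likewise for the horizontal ones, because a diagram can be wrapped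
around, edge by edge, to any place further to the right. In the stabilization at the end `(x, y)`
of a horizontal edge, the new vertical edge spans a short interval `[y, y']`, so it commutes with
every vertical edge not ending there. Sliding it along the horizontal edge, in whichever cyclic
direction avoids the two ends, brings it next to the other end `(xb, y)`. The result is a
stabilization at that vertex, with the roles of the rows `y` and `y'` interchanged.
-/

/-! ### Relabelling columns -/

/-- The abscissas of the vertical edges of `R`. -/
def cols (R : Finset Pt) : Finset ℝ := R.image Prod.fst

/-- The ordinates of the horizontal edges of `R`. -/
def rows (R : Finset Pt) : Finset ℝ := R.image Prod.snd

/-- The mirror image of `R` in the diagonal; it exchanges the roles of rows and columns. -/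
def transpose (R : Finset Pt) : Finset Pt := R.image Prod.swap

/-- The diagram obtained by moving each column `a` to abscissa `f a`. -/
def mapCols (f : ℝ → ℝ) (R : Finset Pt) : Finset Pt := R.image (Prod.map f id)

/-- The diagram obtained by moving each row `b` to ordinate `g b`. -/
def mapRows (g : ℝ → ℝ) (R : Finset Pt) : Finset Pt := R.image (Prod.map id g)

/-- The diagram obtained by moving the column `a` alone, to abscissa `z`. -/
def moveCol (a z : ℝ) (R : Finset Pt) : Finset Pt := mapCols (Function.update id a z) R

variable {R S : Finset Pt} {f g : ℝ → ℝ}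

lemma fst_mem_cols {p : Pt} (hp : p ∈ R) : p.1 ∈ cols R := Finset.mem_image_of_mem _ hp

lemma snd_mem_rows {p : Pt} (hp : p ∈ R) : p.2 ∈ rows R := Finset.mem_image_of_mem _ hp

lemma mem_transpose {p : Pt} : p ∈ transpose R ↔ p.swap ∈ R := by
  simp only [transpose, Finset.mem_image]
  exact ⟨fun ⟨_, hq, h⟩ => h ▸ hq, fun h => ⟨p.swap, h, p.swap_swap⟩⟩

lemma forall_mem_transpose {P : Pt → Prop} :
    (∀ p ∈ transpose R, P p) ↔ ∀ p ∈ R, P p.swap :=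
  Finset.forall_mem_image

lemma exists_mem_transpose {P : Pt → Prop} :
    (∃ p ∈ transpose R, P p) ↔ ∃ p ∈ R, P p.swap := by
  simp only [transpose, Finset.exists_mem_image]

lemma transpose_transpose (R : Finset Pt) : transpose (transpose R) = R := by
  simp [transpose, Finset.image_image]

lemma cols_transpose (R : Finset Pt) : cols (transpose R) = rows R := by
  simp only [cols, transpose, rows, Finset.image_image, Function.comp_def, Prod.fst_swap]

lemma transpose_mapCols (f : ℝ → ℝ) (R : Finset Pt) :
    transpose (mapCols f R) = mapRows f (transpose R) := by
  simp only [transpose, mapCols, mapRows, Finset.image_image]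
  rfl

lemma cols_mapCols (f : ℝ → ℝ) (R : Finset Pt) : cols (mapCols f R) = (cols R).image f := by
  simp only [cols, mapCols, Finset.image_image]
  rfl

lemma rows_mapCols (f : ℝ → ℝ) (R : Finset Pt) : rows (mapCols f R) = rows R := by
  simp only [rows, mapCols, Finset.image_image]
  rfl

lemma mapCols_mapCols (f g : ℝ → ℝ) (R : Finset Pt) :
    mapCols f (mapCols g R) = mapCols (f ∘ g) R := by
  simp only [mapCols, Finset.image_image]
  rfl

lemma mapCols_congr (h : Set.EqOn f g (cols R)) : mapCols f R = mapCols g R :=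
  Finset.image_congr fun _ hp => Prod.ext (h (fst_mem_cols hp)) rfl

lemma mapCols_id (R : Finset Pt) : mapCols id R = R := by
  simp [mapCols]

lemma moveCol_self (a : ℝ) (R : Finset Pt) : moveCol a a R = R :=
  (congrArg (mapCols · R) (Function.update_eq_self a id)).trans (mapCols_id R)

lemma moveCol_moveCol {a u z : ℝ} (hu : u ∉ (cols R).erase a) :
    moveCol u z (moveCol a u R) = moveCol a z R := by
  rw [moveCol, moveCol, mapCols_mapCols]
  refine mapCols_congr fun b hb => ?_
  simp only [Function.comp_apply, Function.update_apply, id]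
  grind

lemma cols_moveCol {a z : ℝ} (ha : a ∈ cols R) :
    cols (moveCol a z R) = insert z ((cols R).erase a) := by
  ext b
  simp only [moveCol, cols_mapCols, Finset.mem_image, Function.update_apply, id]
  grind

lemma card_filter_mapCols (hf : Set.InjOn f (cols R)) (P : Pt → Prop) :
    ((mapCols f R).filter P).card = (R.filter fun q => P (f q.1, q.2)).card := by
  have hinj : Set.InjOn (Prod.map f id) (R : Set Pt) := fun p hp q hq h =>
    Prod.ext (hf (fst_mem_cols hp) (fst_mem_cols hq) (congrArg Prod.fst h))
      (congrArg Prod.snd h :)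
  rw [mapCols, Finset.filter_image]
  exact Finset.card_image_of_injOn (hinj.mono (Finset.filter_subset _ _))

lemma IsDiagram.mapCols (hR : IsDiagram R) (hf : Set.InjOn f (cols R)) :
    IsDiagram (mapCols f R) := by
  refine Finset.forall_mem_image.2 fun p hp => ⟨?_, (card_filter_mapCols hf _).trans (hR p hp).2⟩
  refine (card_filter_mapCols hf _).trans (.trans ?_ (hR p hp).1)
  exact congrArg _ (Finset.filter_congr fun q hq =>
    hf.eq_iff (fst_mem_cols hq) (fst_mem_cols hp))

lemma IsDiagram.moveCol {a z : ℝ} (hR : IsDiagram R) (hz : z ∉ (cols R).erase a) :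
    IsDiagram (moveCol a z R) := by
  refine hR.mapCols fun b hb c hc h => ?_
  simp only [Function.update_apply, id] at h
  grind

lemma card_filter_transpose (R : Finset Pt) (P : Pt → Prop) :
    ((transpose R).filter P).card = (R.filter fun q => P q.swap).card := by
  rw [transpose, Finset.filter_image]
  exact Finset.card_image_of_injective _ Prod.swap_injective

lemma IsDiagram.transpose (hR : IsDiagram R) : IsDiagram (transpose R) :=
  Finset.forall_mem_image.2 fun p hp =>
    ⟨(card_filter_transpose R _).trans (hR p hp).2, (card_filter_transpose R _).trans (hR p hp).1⟩

/-! ### Exchanges of columns -/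

/-- Two columns of `R` are unlinked when the projections of their pairs of endpoints to the
vertical axis are disjoint and do not interleave: this is what a commutation requires of them. -/
def Unlinked (R : Finset Pt) (a b : ℝ) : Prop :=
  (∀ p ∈ R, ∀ q ∈ R, p.1 = a → q.1 = b → p.2 ≠ q.2) ∧ NoInterleaveV R a b

lemma Unlinked.symm {a b : ℝ} (h : Unlinked R a b) : Unlinked R b a :=
  ⟨fun p hp q hq hpb hqa => (h.1 q hq p hp hqa hpb).symm,
    fun p hp p' hp' q hq q' hq' hpb hpb' hqa hqa' hlt =>
      h.2 q hq q' hq' p hp p' hp' hqa hqa' hpb hpb' hlt.symm⟩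

lemma Unlinked.mapCols {a b : ℝ} (h : Unlinked R a b) (hf : Set.InjOn f (cols R))
    (ha : a ∈ cols R) (hb : b ∈ cols R) : Unlinked (mapCols f R) (f a) (f b) := by
  have key {c : ℝ} (hc : c ∈ cols R) {p : Pt} (hp : p ∈ R) (hpc : f p.1 = f c) : p.1 = c :=
    hf (fst_mem_cols hp) hc hpc
  unfold Unlinked NoInterleaveV _root_.mapCols
  simp only [Finset.forall_mem_image, Prod.map_fst, Prod.map_snd, id]
  exact ⟨fun p hp q hq hpa hqb => h.1 p hp q hq (key ha hp hpa) (key hb hq hqb),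
    fun p hp p' hp' q hq q' hq' hpa hpa' hqb hqb' =>
      h.2 p hp p' hp' q hq q' hq' (key ha hp hpa) (key ha hp' hpa') (key hb hq hqb)
        (key hb hq' hqb')⟩

lemma unlinked_of_ordConnected {I : Set ℝ} [I.OrdConnected] {a b : ℝ}
    (ha : ∀ p ∈ R, p.1 = a → p.2 ∈ I) (hb : ∀ p ∈ R, p.1 = b → p.2 ∉ I) : Unlinked R a b := by
  refine ⟨fun p hp q hq hpa hqb hpq => hb q hq hqb (hpq ▸ ha p hp hpa), ?_⟩
  rintro p hp p' hp' q hq q' hq' hpa hpa' hqb hqb' (⟨h₁, h₂, -⟩ | ⟨-, h₂, h₃⟩)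
  · exact hb q hq hqb (Set.Icc_subset I (ha p hp hpa) (ha p' hp' hpa') ⟨h₁.le, h₂.le⟩)
  · exact hb q' hq' hqb' (Set.Icc_subset I (ha p hp hpa) (ha p' hp' hpa') ⟨h₂.le, h₃.le⟩)

/-- A cyclic permutation or a commutation of vertical edges, expressed as a relabelling of the
columns. -/
inductive ColExchange : Finset Pt → Finset Pt → Prop
  | cyclic {R : Finset Pt} {a z : ℝ} (hR : IsDiagram R) (ha : a ∈ cols R)
      (haz : (∀ b ∈ (cols R).erase a, a < b ∧ b < z) ∨ ∀ b ∈ (cols R).erase a, z < b ∧ b < a) :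
      ColExchange R (moveCol a z R)
  | commutation {R : Finset Pt} {a b : ℝ} (hR : IsDiagram R) (ha : a ∈ cols R) (hb : b ∈ cols R)
      (hab : a < b) (hgap : ∀ c ∈ cols R, ¬ (a < c ∧ c < b)) (hunl : Unlinked R a b) :
      ColExchange R (mapCols (Equiv.swap a b) R)

/-- Connected by a finite sequence of exchanges of columns. -/
abbrev ColEquiv : Finset Pt → Finset Pt → Prop := Relation.ReflTransGen ColExchange

lemma ColExchange.isDiagram (h : ColExchange R S) : IsDiagram S := by
  cases h with
  | cyclic hR ha haz =>
    refine hR.moveCol fun hz => ?_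
    rcases haz with haz | haz
    · exact lt_irrefl _ (haz _ hz).2
    · exact lt_irrefl _ (haz _ hz).1
  | commutation hR => exact hR.mapCols (Equiv.injective _).injOn

lemma ColExchange.symm (h : ColExchange R S) : ColExchange S R := by
  have hS := h.isDiagram
  cases h with
  | @cyclic a z hR ha haz =>
    have hz : z ∉ (cols R).erase a := by grind
    have hback : moveCol z a (moveCol a z R) = R := by rw [moveCol_moveCol hz, moveCol_self]
    have hcols := cols_moveCol (z := z) ha
    have := ColExchange.cyclic (a := z) (z := a) hS (by grind) (by grind)
    rwa [hback] at this
  | @commutation a b hR ha hb hab hgap hunl =>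
    have hback : mapCols (Equiv.swap a b) (mapCols (Equiv.swap a b) R) = R := by
      rw [mapCols_mapCols, ← Equiv.coe_trans, Equiv.swap_swap, Equiv.coe_refl, mapCols_id]
    have hcols : cols (mapCols (Equiv.swap a b) R) = cols R := by
      ext c
      simp only [cols_mapCols, Finset.mem_image, Equiv.swap_apply_def]
      grind
    have hunl' := (hunl.mapCols (Equiv.swap a b).injective.injOn ha hb).symm
    rw [Equiv.swap_apply_left, Equiv.swap_apply_right] at hunl'
    have := ColExchange.commutation hS (hcols ▸ ha) (hcols ▸ hb) hab (hcols ▸ hgap) hunl'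
    rwa [hback] at this

lemma ColEquiv.symm (h : ColEquiv R S) : ColEquiv S R :=
  have : Std.Symm ColExchange := ⟨fun _ _ => ColExchange.symm⟩
  Relation.ReflTransGen.stdSymm.symm _ _ h

lemma ColEquiv.isDiagram (h : ColEquiv R S) (hR : IsDiagram R) : IsDiagram S := by
  cases h with
  | refl => exact hR
  | tail _ h => exact h.isDiagram

lemma vmap_eq_map (a b : ℝ) : vmap a b = Prod.map (Function.update id a b) id := by
  ext p <;> simp only [vmap, Prod.map_fst, Prod.map_snd, Function.update_apply] <;> grind

lemma swapv_eq_map (a b : ℝ) : swapv a b = Prod.map (Equiv.swap a b) id := by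
  ext p <;> simp only [swapv, Prod.map_fst, Prod.map_snd, Equiv.swap_apply_def] <;> grind

lemma ColExchange.exchangeMove (h : ColExchange R S) : ExchangeMove R S := by
  have hS := h.isDiagram
  cases h with
  | @cyclic a z hR ha haz =>
    refine Or.inl ⟨hR, hS, vmap a z, Or.inl ⟨a, z, Finset.mem_image.1 ha, ?_, rfl⟩, ?_⟩
    · have hcol : ∀ p ∈ R, p.1 ≠ a → p.1 ∈ (cols R).erase a := fun p hp hpa =>
        Finset.mem_erase.2 ⟨hpa, fst_mem_cols hp⟩
      grind
    · rw [vmap_eq_map]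
      rfl
  | @commutation a b hR ha hb hab hgap hunl =>
    refine Or.inr ⟨hR, hS, swapv a b, Or.inl ⟨a, b, hab.ne, Finset.mem_image.1 ha,
      Finset.mem_image.1 hb, ?_, hunl.1, hunl.2, rfl⟩, ?_⟩
    · rw [min_eq_left hab.le, max_eq_right hab.le]
      exact fun p hp => hgap p.1 (fst_mem_cols hp)
    · rw [swapv_eq_map]
      rfl

lemma image_transpose (f : Pt → Pt) (R : Finset Pt) :
    (transpose R).image (Prod.swap ∘ f ∘ Prod.swap) = transpose (R.image f) := by
  simp only [transpose, Finset.image_image]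
  rfl

lemma CyclicData.transpose {f : Pt → Pt} (h : CyclicData R f) :
    CyclicData (transpose R) (Prod.swap ∘ f ∘ Prod.swap) := by
  unfold CyclicData
  simp only [forall_mem_transpose, exists_mem_transpose, Prod.fst_swap, Prod.snd_swap]
  obtain ⟨a, z, ha, haz, rfl⟩ | ⟨a, z, ha, haz, rfl⟩ := h
  · refine Or.inr ⟨a, z, ha, haz, funext fun p => ?_⟩
    simp only [vmap, hmap, Function.comp_apply, Prod.fst_swap]
    split_ifs <;> rfl
  · refine Or.inl ⟨a, z, ha, haz, funext fun p => ?_⟩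
    simp only [vmap, hmap, Function.comp_apply, Prod.snd_swap]
    split_ifs <;> rfl

lemma CommData.transpose {f : Pt → Pt} (h : CommData R f) :
    CommData (transpose R) (Prod.swap ∘ f ∘ Prod.swap) := by
  unfold CommData NoInterleaveV NoInterleaveH
  simp only [forall_mem_transpose, exists_mem_transpose, Prod.fst_swap, Prod.snd_swap]
  obtain ⟨a, b, hab, ha, hb, hgap, hdisj, hint, rfl⟩ |
    ⟨a, b, hab, ha, hb, hgap, hdisj, hint, rfl⟩ := h
  · refine Or.inr ⟨a, b, hab, ha, hb, hgap, hdisj, hint, funext fun p => ?_⟩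
    simp only [swapv, swaph, Function.comp_apply, Prod.fst_swap]
    split_ifs <;> rfl
  · refine Or.inl ⟨a, b, hab, ha, hb, hgap, hdisj, hint, funext fun p => ?_⟩
    simp only [swapv, swaph, Function.comp_apply, Prod.snd_swap]
    split_ifs <;> rfl

lemma ExchangeMove.transpose (h : ExchangeMove R S) :
    ExchangeMove (transpose R) (transpose S) := by
  obtain ⟨hR, hS, f, hf, rfl⟩ | ⟨hR, hS, f, hf, rfl⟩ := h
  · exact Or.inl ⟨hR.transpose, hS.transpose, _, hf.transpose,
      (image_transpose f R).symm⟩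
  · exact Or.inr ⟨hR.transpose, hS.transpose, _, hf.transpose,
      (image_transpose f R).symm⟩

/-- Connected by a finite sequence of commutations and cyclic permutations. -/
abbrev ExchangeEquiv : Finset Pt → Finset Pt → Prop := Relation.ReflTransGen ExchangeMove

lemma ColEquiv.exchangeEquiv (h : ColEquiv R S) : ExchangeEquiv R S :=
  Relation.ReflTransGen.mono (fun _ _ => ColExchange.exchangeMove) _ _ h

lemma ExchangeEquiv.transpose (h : ExchangeEquiv R S) :
    ExchangeEquiv (transpose R) (transpose S) :=
  Relation.ReflTransGen.lift _root_.transpose (fun _ _ => ExchangeMove.transpose) _ _ h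

lemma ExchangeEquiv.isDiagram (h : ExchangeEquiv R S) (hR : IsDiagram R) : IsDiagram S := by
  cases h with
  | refl => exact hR
  | tail _ h => exact h.elim (fun h => h.2.1) fun h => h.2.1

/-! ### Order-preserving relabellings -/

lemma colEquiv_mapCols_of_forall_lt (hR : IsDiagram R) (hf : StrictMonoOn f (cols R))
    (hlt : ∀ a ∈ cols R, ∀ b ∈ cols R, a < f b) : ColEquiv R (mapCols f R) := by
  -- The columns in a lower set `s` have been moved, in increasing order, by cyclic permutations.
  have key (s : Finset ℝ) (hsub : s ⊆ cols R)
      (hlow : ∀ a ∈ cols R, ∀ b ∈ s, a < b → a ∈ s) :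
      ColEquiv R (mapCols (s.piecewise f id) R) := by
    induction s using Finset.induction_on_max with
    | empty => rw [Finset.piecewise_empty, mapCols_id]
    | insert a s hmax ih =>
      rw [Finset.insert_subset_iff] at hsub
      have ih := ih hsub.2 (by grind)
      have has : a ∉ s := fun ha => lt_irrefl a (hmax a ha)
      have hcyc : ColExchange (mapCols (s.piecewise f id) R)
          (moveCol a (f a) (mapCols (s.piecewise f id) R)) := by
        refine .cyclic (ih.isDiagram hR) ?_ (Or.inl fun b hb => ?_)
        · rw [cols_mapCols, Finset.mem_image]
          exact ⟨a, hsub.1, Finset.piecewise_eq_of_notMem _ _ _ has⟩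
        · rw [cols_mapCols, Finset.mem_erase, Finset.mem_image] at hb
          obtain ⟨hba, c, hc, rfl⟩ := hb
          by_cases hcs : c ∈ s
          · rw [Finset.piecewise_eq_of_mem _ _ _ hcs]
            exact ⟨hlt a hsub.1 c hc, hf hc hsub.1 (hmax c hcs)⟩
          · rw [Finset.piecewise_eq_of_notMem _ _ _ hcs] at hba ⊢
            exact ⟨by grind, hlt c hc a hsub.1⟩
      have hins : moveCol a (f a) (mapCols (s.piecewise f id) R) =
          mapCols ((insert a s).piecewise f id) R := by
        rw [moveCol, mapCols_mapCols]
        refine mapCols_congr fun b hb => ?_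
        simp only [Function.comp_apply, Function.update_apply, Finset.piecewise, id]
        grind
      exact hins ▸ ih.tail hcyc
  have hall : mapCols ((cols R).piecewise f id) R = mapCols f R :=
    mapCols_congr fun a ha => Finset.piecewise_eq_of_mem _ _ _ ha
  exact hall ▸ key (cols R) subset_rfl fun a ha _ _ _ => ha

lemma colEquiv_mapCols_of_strictMonoOn (hR : IsDiagram R) (hf : StrictMonoOn f (cols R)) :
    ColEquiv R (mapCols f R) := by
  obtain ⟨M, hM⟩ := (cols R ∪ (cols R).image f).exists_le
  have hM₁ : ∀ a ∈ cols R, a ≤ M := fun a ha => hM a (Finset.mem_union_left _ ha)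
  have hM₂ : ∀ a ∈ cols R, f a ≤ M := fun a ha =>
    hM _ (Finset.mem_union_right _ (Finset.mem_image_of_mem f ha))
  -- Both diagrams are moved to the same place, to the right of each of them.
  let g : ℝ → ℝ := fun t => M + Real.exp t
  have hg : StrictMono g := fun s t hst => by simpa [g] using hst
  have hMg (t : ℝ) : M < g t := lt_add_of_pos_right M t.exp_pos
  have h₁ : ColEquiv R (mapCols (g ∘ f) R) :=
    colEquiv_mapCols_of_forall_lt hR (hg.comp_strictMonoOn hf) fun a ha b _ =>
      (hM₁ a ha).trans_lt (hMg (f b))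
  have h₂ : ColEquiv (mapCols f R) (mapCols g (mapCols f R)) := by
    refine colEquiv_mapCols_of_forall_lt (hR.mapCols hf.injOn) (hg.strictMonoOn _) ?_
    simp only [cols_mapCols, Finset.forall_mem_image]
    exact fun a ha b _ => (hM₂ a ha).trans_lt (hMg (f b))
  rw [mapCols_mapCols] at h₂
  exact h₁.trans h₂.symm

lemma exchangeEquiv_mapRows_of_strictMonoOn (hR : IsDiagram R) (hg : StrictMonoOn g (rows R)) :
    ExchangeEquiv R (mapRows g R) := by
  rw [← cols_transpose] at hg
  have h := (colEquiv_mapCols_of_strictMonoOn hR.transpose hg).exchangeEquiv.transpose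
  rwa [transpose_mapCols, transpose_transpose] at h

/-! ### Sliding a column -/

section Slide

variable {s u z : ℝ}

lemma colEquiv_moveCol_of_gap (hR : IsDiagram R) (hs : s ∈ cols R) (hu : u ∉ (cols R).erase s)
    (huz : u < z) (hgap : ∀ c ∈ (cols R).erase s, c ∉ Set.Ioc u z) :
    ColEquiv (moveCol s u R) (moveCol s z R) := by
  have hmono : StrictMonoOn (Function.update id u z) (cols (moveCol s u R)) := by
    rw [cols_moveCol hs]
    intro a _ b hb hab
    simp only [Function.update_apply, id]
    grind
  have h := colEquiv_mapCols_of_strictMonoOn (hR.moveCol hu) hmono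
  rwa [← moveCol, moveCol_moveCol hu] at h

lemma colEquiv_moveCol_of_unlinked {c : ℝ} (hR : IsDiagram R) (hs : s ∈ cols R)
    (hu : u ∉ (cols R).erase s) (hz : z ∉ (cols R).erase s) (hc : c ∈ (cols R).erase s)
    (huc : u < c) (hcz : c < z) (hgap : ∀ d ∈ (cols R).erase s, d ∈ Set.Ioo u z → d = c)
    (hunl : Unlinked R s c) : ColEquiv (moveCol s u R) (moveCol s z R) := by
  have hcols := cols_moveCol (z := u) hs
  have hunl' : Unlinked (moveCol s u R) u c := by
    have hinj : Set.InjOn (Function.update id s u) (cols R) := by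
      intro a ha b hb
      simp only [Function.update_apply, id]
      grind
    have := hunl.mapCols hinj hs (Finset.mem_of_mem_erase hc)
    rwa [Function.update_self, Function.update_of_ne (Finset.ne_of_mem_erase hc)] at this
  have hcomm : ColExchange (moveCol s u R) (mapCols (Equiv.swap u c) (moveCol s u R)) :=
    .commutation (hR.moveCol hu) (by grind) (by grind) huc (by grind) hunl'
  -- After the exchange, the columns at `u` and `c` move back to `c` and on to `z`.
  let f : ℝ → ℝ := Function.update (Function.update id u c) c z
  have hf : StrictMonoOn f (cols (mapCols (Equiv.swap u c) (moveCol s u R))) := by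
    rw [cols_mapCols, hcols]
    intro a ha b hb hab
    simp only [Finset.coe_image, Set.mem_image, Equiv.swap_apply_def] at ha hb
    simp only [f, Function.update_apply, id]
    grind
  have hmove : mapCols f (mapCols (Equiv.swap u c) (moveCol s u R)) = moveCol s z R := by
    rw [moveCol, moveCol, mapCols_mapCols, mapCols_mapCols]
    refine mapCols_congr fun a ha => ?_
    simp only [f, Function.comp_apply, Function.update_apply, Equiv.swap_apply_def, id]
    grind
  exact hmove ▸ (Relation.ReflTransGen.single hcomm).trans
    (colEquiv_mapCols_of_strictMonoOn hcomm.isDiagram hf)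

lemma colEquiv_moveCol_of_lt (hR : IsDiagram R) (hs : s ∈ cols R) (hu : u ∉ (cols R).erase s)
    (hz : z ∉ (cols R).erase s) (huz : u < z)
    (hunl : ∀ c ∈ (cols R).erase s, c ∈ Set.Ioo u z → Unlinked R s c) :
    ColEquiv (moveCol s u R) (moveCol s z R) := by
  obtain ⟨A, hA⟩ : ∃ A : Finset ℝ, ∀ c, c ∈ A ↔ c ∈ (cols R).erase s ∧ c ∈ Set.Ioo u z :=
    ⟨_, fun _ => Finset.mem_filter⟩
  induction A using Finset.induction_on_max generalizing z with
  | empty =>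
    refine colEquiv_moveCol_of_gap hR hs hu huz fun c hc hcuz => ?_
    have hcz : c ≠ z := fun h => hz (h ▸ hc)
    exact Finset.notMem_empty c ((hA c).2 ⟨hc, hcuz.1, hcuz.2.lt_of_ne hcz⟩)
  | insert c A hmax ih =>
    obtain ⟨hc, huc, hcz⟩ := (hA c).1 (Finset.mem_insert_self c A)
    obtain ⟨w, hw, hwc⟩ := Order.exists_between_finsets (insert u A) {c} (by grind)
    have huw : u < w := hw u (Finset.mem_insert_self u A)
    replace hwc : w < c := hwc c (Finset.mem_singleton_self c)
    have hwA : ∀ d ∈ (cols R).erase s, d ∈ Set.Ioo u z → d < w ∨ d = c := by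
      intro d hd hdz
      exact (Finset.mem_insert.1 ((hA d).2 ⟨hd, hdz⟩)).symm.imp
        (fun h => hw d (Finset.mem_insert_of_mem h)) id
    have hwf : w ∉ (cols R).erase s := fun h =>
      (hwA w h ⟨huw, hwc.trans hcz⟩).elim (lt_irrefl w) hwc.ne
    have hslide : ColEquiv (moveCol s u R) (moveCol s w R) := by
      refine ih hwf huw (fun d hd hdw => hunl d hd ⟨hdw.1, hdw.2.trans (hwc.trans hcz)⟩) ?_
      clear ih
      grind
    refine hslide.trans (colEquiv_moveCol_of_unlinked hR hs hwf hz hc hwc hcz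
      (fun d hd hdz => ?_) (hunl c hc ⟨huc, hcz⟩))
    exact (hwA d hd ⟨huw.trans hdz.1, hdz.2⟩).resolve_left hdz.1.not_gt

lemma colEquiv_moveCol_of_uIoo (hR : IsDiagram R) (hs : s ∈ cols R) (hu : u ∉ (cols R).erase s)
    (hz : z ∉ (cols R).erase s)
    (hunl : ∀ c ∈ (cols R).erase s, c ∈ Set.uIoo u z → Unlinked R s c) :
    ColEquiv (moveCol s u R) (moveCol s z R) := by
  rcases lt_trichotomy u z with huz | rfl | hzu
  · rw [Set.uIoo_of_lt huz] at hunl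
    exact colEquiv_moveCol_of_lt hR hs hu hz huz hunl
  · rfl
  · rw [Set.uIoo_of_gt hzu] at hunl
    exact (colEquiv_moveCol_of_lt hR hs hz hu hzu hunl).symm

lemma colEquiv_moveCol_of_notMem_uIcc (hR : IsDiagram R) (hs : s ∈ cols R)
    (hu : u ∉ (cols R).erase s) (hz : z ∉ (cols R).erase s)
    (hunl : ∀ c ∈ (cols R).erase s, c ∉ Set.uIcc u z → Unlinked R s c) :
    ColEquiv (moveCol s u R) (moveCol s z R) := by
  wlog huz : u ≤ z generalizing u z
  · exact (this hz hu (by rwa [Set.uIcc_comm]) (le_of_not_ge huz)).symm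
  rw [Set.uIcc_of_le huz] at hunl
  -- The column leaves on the left of the diagram and comes back from the right.
  obtain ⟨m, -, hm⟩ := Order.exists_between_finsets ∅ (insert u (cols R)) (by simp)
  obtain ⟨M, hM, -⟩ := Order.exists_between_finsets (insert m (insert z (cols R))) ∅ (by simp)
  simp only [Finset.forall_mem_insert] at hm hM
  have hmf : m ∉ (cols R).erase s := fun h => lt_irrefl m (hm.2 m (Finset.mem_of_mem_erase h))
  have hMf : M ∉ (cols R).erase s := fun h => lt_irrefl M (hM.2.2 M (Finset.mem_of_mem_erase h))
  have hleft : ColEquiv (moveCol s m R) (moveCol s u R) :=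
    colEquiv_moveCol_of_lt hR hs hmf hu hm.1 fun c hc hcu =>
      hunl c hc fun h => h.1.not_gt hcu.2
  have hright : ColEquiv (moveCol s z R) (moveCol s M R) :=
    colEquiv_moveCol_of_lt hR hs hz hMf hM.2.1 fun c hc hcz =>
      hunl c hc fun h => h.2.not_gt hcz.1
  have hwrap : ColExchange (moveCol s m R) (moveCol s M R) := by
    have hcols : ∀ b ∈ (cols (moveCol s m R)).erase m, m < b ∧ b < M := by
      rw [cols_moveCol hs]
      grind
    have h := ColExchange.cyclic (hR.moveCol hmf) (by grind [cols_moveCol]) (.inl hcols)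
    rwa [moveCol_moveCol hmf] at h
  exact hleft.symm.trans ((Relation.ReflTransGen.single hwrap).trans hright.symm)

end Slide

/-! ### Stabilizations along a horizontal edge -/

/-- `z` is a new coordinate next to `b`: it is not in `A`, and no element of `A` separates it
from `b`. This is the smallness condition on the square of a stabilization. -/
def IsFreshBeside (A : Finset ℝ) (b z : ℝ) : Prop :=
  b ≠ z ∧ z ∉ A ∧ ∀ a ∈ A, ¬ (min b z < a ∧ a < max b z)

lemma exists_isFreshBeside (A : Finset ℝ) (b : ℝ) {u : ℝ} (hu : u ≠ 0) :
    ∃ z, IsFreshBeside A b z ∧ 0 < u * (z - b) := by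
  rcases hu.lt_or_gt with hu | hu
  · obtain ⟨z, hz, hzb⟩ := Order.exists_between_finsets (A.filter (· < b)) {b} (by simp)
    replace hzb : z < b := hzb b (Finset.mem_singleton_self b)
    simp only [Finset.mem_filter, and_imp] at hz
    exact ⟨z, ⟨hzb.ne', by grind, by grind⟩, mul_pos_of_neg_of_neg hu (sub_neg.2 hzb)⟩
  · obtain ⟨z, hbz, hz⟩ := Order.exists_between_finsets {b} (A.filter (b < ·)) (by simp)
    replace hbz : b < z := hbz b (Finset.mem_singleton_self b)
    simp only [Finset.mem_filter, and_imp] at hz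
    exact ⟨z, ⟨hbz.ne, by grind, by grind⟩, mul_pos hu (sub_pos.2 hbz)⟩

section Stabilization

variable {x xb y x' y' x'' y'' a b : ℝ} {R' : Finset Pt} {t : StabType}

lemma stabData_iff : StabData x y x' y' R R' ↔ (x, y) ∈ R ∧ IsFreshBeside (cols R) x x' ∧
    IsFreshBeside (rows R) y y' ∧ R' = stabSet x y x' y' R := by
  simp only [StabData, IsFreshBeside, cols, rows, Finset.mem_image, not_exists, not_and,
    forall_exists_index, and_imp, forall_apply_eq_imp_iff₂, ne_eq]
  tauto

lemma mem_stabSet : (a, b) ∈ stabSet x y x' y' R ↔ (a = x' ∧ b = y) ∨ (a = x ∧ b = y') ∨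
    (a = x' ∧ b = y') ∨ ((a, b) ∈ R ∧ ¬ (a = x ∧ b = y)) := by
  simp only [stabSet, Finset.mem_insert, Finset.mem_erase, Prod.mk.injEq, ne_eq]
  tauto

lemma transpose_stabSet : transpose (stabSet x y x' y' R) = stabSet y x y' x' (transpose R) := by
  ext ⟨a, b⟩
  simp only [mem_transpose, Prod.swap_prod_mk, mem_stabSet]
  tauto

lemma cols_stabSet_subset (hv : (x, y) ∈ R) :
    cols (stabSet x y x' y' R) ⊆ insert x' (cols R) := by
  have hx : x ∈ cols R := fst_mem_cols hv
  refine Finset.image_subset_iff.2 fun ⟨a, b⟩ hp => ?_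
  rcases mem_stabSet.1 hp with ⟨rfl, -⟩ | ⟨rfl, -⟩ | ⟨rfl, -⟩ | ⟨hp, -⟩
  · exact Finset.mem_insert_self _ _
  · exact Finset.mem_insert_of_mem hx
  · exact Finset.mem_insert_self _ _
  · exact Finset.mem_insert_of_mem (fst_mem_cols hp)

lemma rows_stabSet_subset (hv : (x, y) ∈ R) :
    rows (stabSet x y x' y' R) ⊆ insert y' (rows R) := by
  rw [← cols_transpose, ← cols_transpose, transpose_stabSet]
  exact cols_stabSet_subset (mem_transpose.2 hv)

lemma IsDiagram.eq_or_eq_of_mem_row (hR : IsDiagram R) (hv : (x, y) ∈ R) (hb : (xb, y) ∈ R)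
    (hne : x ≠ xb) (ha : (a, y) ∈ R) : a = x ∨ a = xb := by
  have hsub : {(x, y), (xb, y)} ⊆ R.filter (·.2 = y) := by
    simp [Finset.insert_subset_iff, hv, hb]
  have hcard : (R.filter (·.2 = y)).card ≤ ({(x, y), (xb, y)} : Finset Pt).card := by
    rw [(hR _ hv).2, Finset.card_pair (by simpa using hne)]
  have hmem : (a, y) ∈ ({(x, y), (xb, y)} : Finset Pt) := by
    rw [Finset.eq_of_subset_of_card_le hsub hcard]
    exact Finset.mem_filter.2 ⟨ha, rfl⟩
  simpa using hmem

lemma unlinked_stabSet (hR : IsDiagram R) (hv : (x, y) ∈ R) (hb : (xb, y) ∈ R) (hne : x ≠ xb)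
    (hx' : x' ∉ cols R) (hy' : IsFreshBeside (rows R) y y') (hax' : a ≠ x') (hax : a ≠ x)
    (haxb : a ≠ xb) : Unlinked (stabSet x y x' y' R) x' a := by
  have hx'x : x' ≠ x := fun h => hx' (h ▸ fst_mem_cols hv)
  refine unlinked_of_ordConnected (I := Set.uIcc y y') ?_ ?_
  · rintro ⟨c, d⟩ hp rfl
    rcases mem_stabSet.1 hp with ⟨-, rfl⟩ | ⟨hcx, -⟩ | ⟨-, rfl⟩ | ⟨hp, -⟩
    · exact Set.left_mem_uIcc
    · exact absurd hcx hx'x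
    · exact Set.right_mem_uIcc
    · exact absurd (fst_mem_cols hp) hx'
  · rintro ⟨c, d⟩ hp rfl
    have hpR : (c, d) ∈ R := by grind [mem_stabSet]
    have hdy : d ≠ y := by
      rintro rfl
      exact (hR.eq_or_eq_of_mem_row hv hb hne hpR).elim hax haxb
    have hdy' : d ≠ y' := fun h => hy'.2.1 (h ▸ snd_mem_rows hpR)
    have hgap := hy'.2.2 d (snd_mem_rows hpR)
    rw [Set.mem_uIcc]
    grind

/-- The new vertical edge of a stabilization at `(x, y)` is unlinked from all columns except `x`
and `xb`, and these two do not separate its old place `x'` from its new place `x''` cyclically. -/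
lemma colEquiv_moveCol_stabSet (hR : IsDiagram R) (hR' : IsDiagram (stabSet x y x' y' R))
    (hv : (x, y) ∈ R) (hb : (xb, y) ∈ R) (hne : x ≠ xb) (hx' : IsFreshBeside (cols R) x x')
    (hy' : IsFreshBeside (rows R) y y') (hx'' : IsFreshBeside (cols R) xb x'')
    (hside : 0 < (x - x') * (x'' - xb)) :
    ColEquiv (stabSet x y x' y' R) (moveCol x' x'' (stabSet x y x' y' R)) := by
  set T := stabSet x y x' y' R
  have hx'T : x' ∈ cols T := fst_mem_cols (mem_stabSet.2 (.inl ⟨rfl, rfl⟩) : (x', y) ∈ T)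
  have hx''T : x'' ∉ (cols T).erase x' := by
    rw [Finset.mem_erase]
    rintro ⟨hne', hx''T⟩
    exact hx''.2.1 (Finset.mem_of_mem_insert_of_ne (cols_stabSet_subset hv hx''T) hne')
  have hunl : ∀ c ∈ (cols T).erase x', c ≠ x → c ≠ xb → Unlinked T x' c := fun c hc =>
    unlinked_stabSet hR hv hb hne hx'.2.1 hy' (Finset.ne_of_mem_erase hc)
  have hsep : (x ∉ Set.uIoo x' x'' ∧ xb ∉ Set.uIoo x' x'') ∨
      (x ∈ Set.uIcc x' x'' ∧ xb ∈ Set.uIcc x' x'') := by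
    have hcols := hx'.2.2 xb (fst_mem_cols hb)
    have hcols' := hx''.2.2 x (fst_mem_cols hv)
    rw [Set.mem_uIcc, Set.mem_uIcc, Set.uIoo, Set.mem_Ioo, Set.mem_Ioo]
    rcases pos_and_pos_or_neg_and_neg_of_mul_pos hside with h | h <;> grind
  conv_lhs => rw [← moveCol_self x' T]
  rcases hsep with ⟨hx, hxb⟩ | ⟨hx, hxb⟩
  · exact colEquiv_moveCol_of_uIoo hR' hx'T (Finset.notMem_erase _ _) hx''T fun c hc hcI =>
      hunl c hc (fun h => hx (h ▸ hcI)) fun h => hxb (h ▸ hcI)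
  · exact colEquiv_moveCol_of_notMem_uIcc hR' hx'T (Finset.notMem_erase _ _) hx''T fun c hc hcI =>
      hunl c hc (fun h => hcI (h ▸ hx)) fun h => hcI (h ▸ hxb)

lemma strictMonoOn_update_update {A : Finset ℝ} (hy' : IsFreshBeside A y y')
    (hy'' : IsFreshBeside A y y'') (hside : 0 < (y - y') * (y'' - y)) :
    StrictMonoOn (Function.update (Function.update id y y'') y' y) (insert y' A : Finset ℝ) := by
  have hord : (y' < y ∧ y < y'') ∨ (y'' < y ∧ y < y') := by
    rcases pos_and_pos_or_neg_and_neg_of_mul_pos hside with h | h <;> grind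
  have hother : ∀ c ∈ A, c ≠ y → (c < y' ∧ c < y'') ∨ (y' < c ∧ y'' < c) := by
    intro c hc hcy
    have h₁ := hy'.2.2 c hc
    have h₂ := hy''.2.2 c hc
    have h₃ : c ≠ y' := fun h => hy'.2.1 (h ▸ hc)
    have h₄ : c ≠ y'' := fun h => hy''.2.1 (h ▸ hc)
    grind
  intro c hc d hd hcd
  simp only [Finset.coe_insert, Set.mem_insert_iff, Finset.mem_coe] at hc hd
  have hcA := hother c
  have hdA := hother d
  simp only [Function.update_apply, id]
  clear hother hy' hy'' hside
  grind

/-- The vertical edges at `x'` and the horizontal edges at `y` and `y'` of the stabilization at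
`(x, y)` become those at `x''`, `y''` and `y` of the stabilization at `(xb, y)`. -/
lemma mapRows_moveCol_stabSet (hR : IsDiagram R) (hv : (x, y) ∈ R) (hb : (xb, y) ∈ R)
    (hne : x ≠ xb) (hx' : x' ∉ cols R) (hy' : y' ∉ rows R) :
    mapRows (Function.update (Function.update id y y'') y' y)
      (moveCol x' x'' (stabSet x y x' y' R)) = stabSet xb y x'' y'' R := by
  have hcol : ∀ p ∈ R, p.1 ≠ x' := fun p hp h => hx' (h ▸ fst_mem_cols hp)
  have hrow : ∀ p ∈ R, p.2 ≠ y' := fun p hp h => hy' (h ▸ snd_mem_rows hp)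
  have hy := hrow _ hv
  have hx := hcol _ hv
  have hxb := hcol _ hb
  obtain ⟨C, hRC, hC⟩ : ∃ C : Finset Pt, R = {(x, y), (xb, y)} ∪ C ∧ ∀ p ∈ C, p.2 ≠ y := by
    refine ⟨R.filter (·.2 ≠ y), ?_, fun p hp => (Finset.mem_filter.1 hp).2⟩
    ext ⟨a, b⟩
    have := hR.eq_or_eq_of_mem_row (a := a) hv hb hne
    simp only [Finset.mem_union, Finset.mem_insert, Finset.mem_singleton, Finset.mem_filter,
      Prod.mk.injEq]
    grind
  have hfix : C.image (Prod.map (Function.update id x' x'')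
      (Function.update (Function.update id y y'') y' y)) = C := by
    refine (Finset.image_congr fun p hp => ?_).trans Finset.image_id
    have hpR : p ∈ R := hRC ▸ Finset.mem_union_right _ hp
    simp only [Prod.map, Function.update_of_ne (hcol p hpR), Function.update_of_ne (hrow p hpR),
      Function.update_of_ne (hC p hp), id]
  have hstab : stabSet x y x' y' R = {(x', y), (x, y'), (x', y'), (xb, y)} ∪ C := by
    ext ⟨a, b⟩
    simp only [mem_stabSet, hRC, Finset.mem_union, Finset.mem_insert, Finset.mem_singleton,
      Prod.mk.injEq]
    grind
  have hstab' : stabSet xb y x'' y'' R = {(x'', y''), (x, y), (x'', y), (xb, y'')} ∪ C := by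
    ext ⟨a, b⟩
    simp only [mem_stabSet, hRC, Finset.mem_union, Finset.mem_insert, Finset.mem_singleton,
      Prod.mk.injEq]
    grind
  rw [hstab', hstab, moveCol, mapCols, mapRows, Finset.image_image, Prod.map_comp_map,
    Function.comp_id, Function.id_comp, Finset.image_union, hfix]
  simp [Finset.image_insert, hx, hxb, hy]

lemma exchangeEquiv_stabSet (hR : IsDiagram R) (hR' : IsDiagram (stabSet x y x' y' R))
    (hv : (x, y) ∈ R) (hb : (xb, y) ∈ R) (hne : x ≠ xb) (hx' : IsFreshBeside (cols R) x x')
    (hy' : IsFreshBeside (rows R) y y') (hx'' : IsFreshBeside (cols R) xb x'')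
    (hy'' : IsFreshBeside (rows R) y y'') (hxside : 0 < (x - x') * (x'' - xb))
    (hyside : 0 < (y - y') * (y'' - y)) :
    ExchangeEquiv (stabSet x y x' y' R) (stabSet xb y x'' y'' R) := by
  have hslide := colEquiv_moveCol_stabSet hR hR' hv hb hne hx' hy' hx'' hxside
  have hmono : StrictMonoOn (Function.update (Function.update id y y'') y' y)
      (rows (moveCol x' x'' (stabSet x y x' y' R))) := by
    rw [moveCol, rows_mapCols]
    exact (strictMonoOn_update_update hy' hy'' hyside).mono (rows_stabSet_subset hv)
  rw [← mapRows_moveCol_stabSet hR hv hb hne hx'.2.1 hy'.2.1]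
  exact hslide.exchangeEquiv.trans
    (exchangeEquiv_mapRows_of_strictMonoOn (hslide.isDiagram hR') hmono)

/-- The square at `(xb, y)` is placed on the opposite side from the one at `(x, y)`, both
horizontally and vertically: the two changes of sign preserve the type. -/
lemma StabMoveAt.exists_of_mem_row (h : StabMoveAt t (x, y) R R') (hb : (xb, y) ∈ R) :
    ∃ R'', StabMoveAt t (xb, y) R R'' ∧ ExchangeEquiv R' R'' := by
  rcases eq_or_ne x xb with rfl | hne
  · exact ⟨R', h, .refl⟩
  obtain ⟨hR, hR', x', y', hdata, ht⟩ := h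
  obtain ⟨hv, hx', hy', rfl⟩ := stabData_iff.1 hdata
  obtain ⟨x'', hx'', hxside⟩ := exists_isFreshBeside (cols R) xb (sub_ne_zero.2 hx'.1)
  obtain ⟨y'', hy'', hyside⟩ := exists_isFreshBeside (rows R) y (sub_ne_zero.2 hy'.1)
  have hequiv := exchangeEquiv_stabSet hR hR' hv hb hne hx' hy' hx'' hy'' hxside hyside
  have htype : 0 < (x - x') * (y - y') ↔ 0 < (xb - x'') * (y - y'') := by
    have hprod : 0 < ((x - x') * (y - y')) * ((xb - x'') * (y - y'')) := by
      linear_combination mul_pos hxside hyside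
    exact pos_iff_pos_of_mul_pos hprod
  exact ⟨_, ⟨hR, hequiv.isDiagram hR', x'', y'', stabData_iff.2 ⟨hb, hx'', hy'', rfl⟩,
    ht.trans htype⟩, hequiv⟩

lemma StabMoveAt.transpose {v : Pt} (h : StabMoveAt t v R R') :
    StabMoveAt t v.swap (transpose R) (transpose R') := by
  obtain ⟨hR, hR', x', y', hdata, ht⟩ := h
  obtain ⟨hv, hx', hy', rfl⟩ := stabData_iff.1 hdata
  refine ⟨hR.transpose, hR'.transpose, y', x', stabData_iff.2 ?_, ?_⟩
  · rw [cols_transpose, ← cols_transpose (transpose R), transpose_transpose]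
    exact ⟨mem_transpose.2 hv, hy', hx', transpose_stabSet⟩
  · rw [ht, mul_comm]
    rfl

lemma StabMoveAt.exists_of_mem_col {yb : ℝ} (h : StabMoveAt t (x, y) R R') (hb : (x, yb) ∈ R) :
    ∃ R'', StabMoveAt t (x, yb) R R'' ∧ ExchangeEquiv R' R'' := by
  obtain ⟨R'', hstab, hequiv⟩ := h.transpose.exists_of_mem_row (mem_transpose.2 hb)
  have hequiv' := hequiv.transpose
  rw [transpose_transpose] at hequiv'
  exact ⟨_root_.transpose R'', transpose_transpose R ▸ hstab.transpose, hequiv'⟩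

end Stabilization

/-! ### Connectedness of a component -/

/-- The vertices satisfying `motive` form a subdiagram, which is everything by minimality. -/
lemma IsKnotDiagram.induction {K : Finset Pt} {motive : Pt → Prop} {v P : Pt}
    (hK : IsKnotDiagram K) (hv : v ∈ K) (hP : P ∈ K) (base : motive v)
    (col : ∀ x y y', (x, y) ∈ K → (x, y') ∈ K → motive (x, y) → motive (x, y'))
    (row : ∀ x x' y, (x, y) ∈ K → (x', y) ∈ K → motive (x, y) → motive (x', y)) : motive P := by
  have hdiag : IsDiagram (K.filter motive) := by
    rintro ⟨x, y⟩ hp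
    obtain ⟨hpK, hpm⟩ := Finset.mem_filter.1 hp
    refine ⟨(congrArg _ ?_).trans (hK.1 _ hpK).1, (congrArg _ ?_).trans (hK.1 _ hpK).2⟩
    · rw [Finset.filter_filter]
      refine Finset.filter_congr ?_
      rintro ⟨a, b⟩ hq
      exact and_iff_right_of_imp fun h => by subst h; exact col _ _ _ hpK hq hpm
    · rw [Finset.filter_filter]
      refine Finset.filter_congr ?_
      rintro ⟨a, b⟩ hq
      exact and_iff_right_of_imp fun h => by subst h; exact row _ _ _ hpK hq hpm
  have hall : K.filter motive = K :=
    hK.2.2 _ (Finset.filter_subset _ _) hdiag ⟨v, Finset.mem_filter.2 ⟨hv, base⟩⟩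
  exact (Finset.mem_filter.1 (hall ▸ hP)).2

/-- **Lemma (the stabilization scene can be moved to any vertex of the component).**
If `R ↦ R'` is a stabilization at a vertex `v`, and `P` is any vertex of the connected
component of `R` containing `v`, then there is a stabilization `R ↦ R''` of the same type
occurring in a small neighborhood of `P` such that `R'` and `R''` are connected by a finite
sequence of commutations and cyclic permutations. -/
theorem stabilization_at_any_vertex (R R' K : Finset Pt) (t : StabType) (v P : Pt)
    (h : StabMoveAt t v R R') (hK : IsComponent R K) (hv : v ∈ K) (hP : P ∈ K) :
    ∃ R'' : Finset Pt, StabMoveAt t P R R'' ∧ Relation.ReflTransGen ExchangeMove R' R'' := by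
  obtain ⟨hKR, hknot⟩ := hK
  refine hknot.induction (motive := fun p => ∃ R'', StabMoveAt t p R R'' ∧ ExchangeEquiv R' R'')
    hv hP ⟨R', h, .refl⟩ ?_ ?_
  · rintro x y y' - hy' ⟨S, hS, hRS⟩
    obtain ⟨R'', hR'', hSR⟩ := hS.exists_of_mem_col (hKR hy')
    exact ⟨R'', hR'', hRS.trans hSR⟩
  · rintro x x' y - hx' ⟨S, hS, hRS⟩
    obtain ⟨R'', hR'', hSR⟩ := hS.exists_of_mem_row (hKR hx')
    exact ⟨R'', hR'', hRS.trans hSR⟩
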